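/- The sequence (f_k) satisfies the recurrence f_k = ((k−1+δ)·f_{k−1} − (k+δ)·f_k)/(2+ξ) + 1_{k=m} for every integer k ≥ m (where 1_{k=m} equals 1 if k = m and 0 otherwise), and for every integer k ≥ m it has the closed form f_k = (2+ξ)/(2+ξ+m+δ) · (Γ(k+δ)·Γ(m+3+ξ+δ)) / (Γ(k+3+ξ+δ)·Γ(m+δ)), where Γ denotes the real Gamma function. -/

import Mathlib

open Real

/-- The sequence `(f_k)`: `f_k = 0` for `k < m`, `f_m = (2+ξ)/(2+ξ+m+δ)`, and
`f_k = f_{k-1}·(k-1+δ)/(2+ξ+k+δ)` for `k > m`. -/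
noncomputable def f (ξ δ : ℝ) (m : ℕ) : ℕ → ℝ
  | 0 => if m = 0 then (2 + ξ) / (2 + ξ + (m : ℝ) + δ) else 0
  | k + 1 =>
    if k + 1 < m then 0
    else if k + 1 = m then (2 + ξ) / (2 + ξ + (m : ℝ) + δ)
    else f ξ δ m k * ((k : ℝ) + δ) / (2 + ξ + ((k : ℝ) + 1) + δ)

/-!
Clearing denominators, the defining relations say
`(2 + ξ + k + δ) f_k = (k - 1 + δ) f_{k-1} + (2 + ξ) 1_{k = m}` for `k ≥ m`; dividing by `2 + ξ` and
isolating `f_k` gives the recurrence. For the closed form, `f_{k+1} / f_k = (k + a) / (k + b)` with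
`a = δ` and `b = 3 + ξ + δ`, and by `Γ(s + 1) = s Γ(s)` the sequence `Γ(k + a) / Γ(k + b)` has the
same ratios.
-/

theorem ne_neg_natCast_of_pos {x : ℝ} (hx : 0 < x) (n : ℕ) : x ≠ -n :=
  ((neg_nonpos.mpr n.cast_nonneg).trans_lt hx).ne'

theorem natCast_add_ne_zero_of_le {a : ℝ} {m k : ℕ} (ha : ∀ n : ℕ, (m : ℝ) + a ≠ -n)
    (hmk : m ≤ k) : (k : ℝ) + a ≠ 0 := by
  intro hzero
  apply ha (k - m)
  rw [Nat.cast_sub hmk]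
  linarith

theorem eq_mul_Gamma_div_Gamma_of_succ_eq {u : ℕ → ℝ} {a b : ℝ} {m k : ℕ}
    (ha : ∀ n : ℕ, (m : ℝ) + a ≠ -n) (hb : ∀ n : ℕ, (m : ℝ) + b ≠ -n)
    (hu : ∀ j, m ≤ j → u (j + 1) = u j * (j + a) / (j + b)) (hmk : m ≤ k) :
    u k = u m * (Gamma (k + a) * Gamma (m + b)) / (Gamma (k + b) * Gamma (m + a)) := by
  have hΓa : Gamma (m + a) ≠ 0 := Gamma_ne_zero ha
  have hΓb : Gamma (m + b) ≠ 0 := Gamma_ne_zero hb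
  induction k, hmk using Nat.le_induction with
  | base => field_simp
  | succ j hmj ih =>
    have hΓa_succ : Gamma ((j + 1 : ℕ) + a) = (j + a) * Gamma (j + a) := by
      rw [← Gamma_add_one (natCast_add_ne_zero_of_le ha hmj), Nat.cast_succ, add_right_comm]
    have hΓb_succ : Gamma ((j + 1 : ℕ) + b) = (j + b) * Gamma (j + b) := by
      rw [← Gamma_add_one (natCast_add_ne_zero_of_le hb hmj), Nat.cast_succ, add_right_comm]
    rw [hu j hmj, ih, hΓa_succ, hΓb_succ, div_mul_eq_mul_div, div_div]
    congr 1 <;> ring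

section

variable {ξ δ : ℝ} {m k : ℕ}

theorem f_eq_zero_of_lt (hkm : k < m) : f ξ δ m k = 0 := by
  cases k with
  | zero => rw [f, if_neg hkm.ne']
  | succ k => rw [f, if_pos hkm]

theorem f_self : f ξ δ m m = (2 + ξ) / (2 + ξ + m + δ) := by
  cases m with
  | zero => rw [f, if_pos rfl]
  | succ m => rw [f, if_neg (lt_irrefl _), if_pos rfl]

theorem f_succ_of_le (hmk : m ≤ k) :
    f ξ δ m (k + 1) = f ξ δ m k * (k + δ) / (2 + ξ + (k + 1) + δ) := by
  rw [f, if_neg (by omega), if_neg (by omega)]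

theorem mul_f_eq_add_ite (hm : 1 ≤ m) (hmk : m ≤ k) (hk : 2 + ξ + k + δ ≠ 0) :
    (2 + ξ + k + δ) * f ξ δ m k =
      (k - 1 + δ) * f ξ δ m (k - 1) + (2 + ξ) * (if k = m then 1 else 0) := by
  rcases hmk.eq_or_lt with rfl | hlt
  · rw [f_eq_zero_of_lt (Nat.sub_lt hm one_pos), f_self, if_pos rfl, mul_div_cancel₀ _ hk]
    ring
  · obtain ⟨j, rfl⟩ : ∃ j, k = j + 1 := Nat.exists_eq_add_one.mpr (hm.trans_lt hlt |>.pos)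
    rw [Nat.cast_succ] at hk ⊢
    rw [if_neg hlt.ne', Nat.add_sub_cancel, f_succ_of_le (Nat.lt_succ_iff.mp hlt),
      mul_div_cancel₀ _ hk]
    ring

theorem f_recurrence (hξ : 2 + ξ ≠ 0) (hm : 1 ≤ m) (hmk : m ≤ k) (hk : 2 + ξ + k + δ ≠ 0) :
    f ξ δ m k =
      ((k - 1 + δ) * f ξ δ m (k - 1) - (k + δ) * f ξ δ m k) / (2 + ξ)
        + (if k = m then 1 else 0) := by
  rw [div_add' _ _ _ hξ, eq_div_iff hξ]
  linear_combination mul_f_eq_add_ite hm hmk hk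

theorem f_closed_form (hδ : ∀ n : ℕ, (m : ℝ) + δ ≠ -n)
    (hξδ : ∀ n : ℕ, (m : ℝ) + (3 + ξ + δ) ≠ -n) (hmk : m ≤ k) :
    f ξ δ m k = (2 + ξ) / (2 + ξ + m + δ) *
      (Gamma (k + δ) * Gamma (m + 3 + ξ + δ)) / (Gamma (k + 3 + ξ + δ) * Gamma (m + δ)) := by
  have hsucc (j : ℕ) (hmj : m ≤ j) :
      f ξ δ m (j + 1) = f ξ δ m j * (j + δ) / (j + (3 + ξ + δ)) := by
    rw [f_succ_of_le hmj]
    ring_nf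
  have hclosed := eq_mul_Gamma_div_Gamma_of_succ_eq hδ hξδ hsucc hmk
  simpa only [f_self, ← add_assoc] using hclosed

end

theorem f_recurrence_and_closed_form_general (ξ δ : ℝ) (m : ℕ) (hξ : 2 + ξ ≠ 0)
    (hδ : ∀ n : ℕ, (m : ℝ) + δ ≠ -n) (hξδ : ∀ n : ℕ, (m : ℝ) + (2 + ξ + δ) ≠ -n) (hm : 1 ≤ m) :
    ∀ k : ℕ, m ≤ k →
      (f ξ δ m k =
          (((k : ℝ) - 1 + δ) * f ξ δ m (k - 1) - ((k : ℝ) + δ) * f ξ δ m k) / (2 + ξ)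
            + (if k = m then (1 : ℝ) else 0)) ∧
      f ξ δ m k = (2 + ξ) / (2 + ξ + (m : ℝ) + δ) *
          (Real.Gamma ((k : ℝ) + δ) * Real.Gamma ((m : ℝ) + 3 + ξ + δ)) /
          (Real.Gamma ((k : ℝ) + 3 + ξ + δ) * Real.Gamma ((m : ℝ) + δ)) := by
  intro k hmk
  have hk : 2 + ξ + k + δ ≠ 0 := by
    convert natCast_add_ne_zero_of_le hξδ hmk using 1
    ring
  have hξδ_succ (n : ℕ) : (m : ℝ) + (3 + ξ + δ) ≠ -n := by
    intro hpole
    apply hξδ (n + 1)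
    push_cast
    linarith
  exact ⟨f_recurrence hξ hm hmk hk, f_closed_form hδ hξδ_succ hmk⟩

/-- The sequence `(f_k)` satisfies, for every `k ≥ m`, the recurrence
`f_k = ((k−1+δ)·f_{k−1} − (k+δ)·f_k)/(2+ξ) + 1_{k=m}` and has the closed form
`f_k = (2+ξ)/(2+ξ+m+δ) · Γ(k+δ)Γ(m+3+ξ+δ)/(Γ(k+3+ξ+δ)Γ(m+δ))`. -/
theorem f_recurrence_and_closed_form (ξ δ : ℝ) (hξ : 0 < ξ) (hδ : 0 < δ)
    (m : ℕ) (hm : 1 ≤ m) :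
    ∀ k : ℕ, m ≤ k →
      (f ξ δ m k =
          (((k : ℝ) - 1 + δ) * f ξ δ m (k - 1) - ((k : ℝ) + δ) * f ξ δ m k) / (2 + ξ)
            + (if k = m then (1 : ℝ) else 0)) ∧
      f ξ δ m k = (2 + ξ) / (2 + ξ + (m : ℝ) + δ) *
          (Real.Gamma ((k : ℝ) + δ) * Real.Gamma ((m : ℝ) + 3 + ξ + δ)) /
          (Real.Gamma ((k : ℝ) + 3 + ξ + δ) * Real.Gamma ((m : ℝ) + δ)) := by
  exact f_recurrence_and_closed_form_general ξ δ m (by positivity)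
    (ne_neg_natCast_of_pos (by positivity)) (ne_neg_natCast_of_pos (by positivity)) hm
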